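/- arXiv:1609.09526 — 2 statements merged into one kernel-verified Lean document; each statement's English description precedes it below -/
import Mathlib

section
/- Let c ≥ 1 be an integer and let (b, i) be a pair of integers with i = ((c−1)/2)·b − (c−1) and b ≥ 2c² + 2c + 2 (i.e., (b, i) lies on the lower facet of the closure of the cone σ_c°). Then there exists a lattice triangle T with b(T) = b and i(T) = i; such a T can be taken with vertices (0,0), ((2i+b−2)/c, 0), (B, c) for any integer B ≥ 0 with gcd(B, c) = gcd(B − (2i+b−2)/c, c) = 1. -/
open MeasureTheory

/-- The point of `ℝ²` corresponding to an integer point. -/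
def toR2 (z : ℤ × ℤ) : ℝ × ℝ := ((z.1 : ℝ), (z.2 : ℝ))

/-- A lattice polygon: a two-dimensional convex hull of finitely many integer points. -/
def IsLatticePolygon (P : Set (ℝ × ℝ)) : Prop :=
  ∃ S : Finset (ℤ × ℤ), P = convexHull ℝ (toR2 '' (S : Set (ℤ × ℤ))) ∧ affineSpan ℝ P = ⊤

/-- A lattice triangle: the convex hull of three affinely independent integer points. -/
def IsLatticeTriangle (T : Set (ℝ × ℝ)) : Prop :=
  ∃ v0 v1 v2 : ℤ × ℤ, AffineIndependent ℝ ![toR2 v0, toR2 v1, toR2 v2] ∧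
    T = convexHull ℝ {toR2 v0, toR2 v1, toR2 v2}

/-- The number of lattice points on the boundary. -/
noncomputable def bcount (P : Set (ℝ × ℝ)) : ℕ :=
  Set.ncard {z : ℤ × ℤ | toR2 z ∈ frontier P}

/-- The number of lattice points in the interior. -/
noncomputable def icount (P : Set (ℝ × ℝ)) : ℕ :=
  Set.ncard {z : ℤ × ℤ | toR2 z ∈ interior P}

/-- The Euclidean area. -/
noncomputable def area (P : Set (ℝ × ℝ)) : ℝ := (volume P).toReal


/-- The closed triangle described by its three supporting half planes. -/
def triSet (a B c : ℝ) : Set (ℝ × ℝ) :=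
  {p | 0 ≤ p.2} ∩ ({p | 0 ≤ c * p.1 - B * p.2} ∩ {p | -(c * a) ≤ (B - a) * p.2 - c * p.1})

theorem hull_eq_triSet (a B c : ℤ) (ha : 0 < a) (hc : 0 < c) :
    convexHull ℝ {toR2 (0, 0), toR2 (a, 0), toR2 (B, c)} = triSet a B c := by
  have ha' : (0 : ℝ) < a := by exact_mod_cast ha
  have hc' : (0 : ℝ) < c := by exact_mod_cast hc
  apply Set.Subset.antisymm
  · apply convexHull_min
    · rintro p hp
      simp only [Set.mem_insert_iff, Set.mem_singleton_iff] at hp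
      rcases hp with rfl | rfl | rfl <;>
        simp only [triSet, toR2, Set.mem_inter_iff, Set.mem_ofPred_eq, Int.cast_zero] <;>
        refine ⟨?_, ?_, ?_⟩ <;> nlinarith [mul_pos ha' hc']
    · rintro p ⟨h1, h2, h3⟩ q ⟨g1, g2, g3⟩ s t hs ht hst
      simp only [Set.mem_ofPred_eq] at h1 h2 h3 g1 g2 g3
      have ht' : t = 1 - s := by linarith
      refine ⟨?_, ?_, ?_⟩ <;>
        simp only [Set.mem_ofPred_eq, Prod.fst_add, Prod.snd_add, Prod.smul_fst, Prod.smul_snd,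
          smul_eq_mul]
      · positivity
      · nlinarith [mul_nonneg hs h2, mul_nonneg ht g2]
      · have e1 := mul_nonneg hs (sub_nonneg.2 h3)
        have e2 := mul_nonneg ht (sub_nonneg.2 g3)
        subst ht'
        nlinarith
  · rintro ⟨x, y⟩ ⟨h1, h2, h3⟩
    simp only [Set.mem_ofPred_eq] at h1 h2 h3
    have hac : (0 : ℝ) < a * c := by positivity
    set l1 : ℝ := (c * x - B * y) / (a * c) with hl1
    set l2 : ℝ := y / c with hl2
    have p1 : 0 ≤ l1 := by positivity
    have p2 : 0 ≤ l2 := by positivity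
    have p0 : 0 ≤ 1 - l1 - l2 := by
      have : 1 - l1 - l2 = ((B - a) * y - c * x + c * a) / (a * c) := by
        rw [hl1, hl2]; field_simp; ring
      rw [this]
      apply div_nonneg _ hac.le
      linarith
    have key := (convex_convexHull ℝ
      ({toR2 (0, 0), toR2 (a, 0), toR2 (B, c)} : Set (ℝ × ℝ))).sum_mem
      (t := (Finset.univ : Finset (Fin 3))) (w := ![1 - l1 - l2, l1, l2])
      (z := ![toR2 (0, 0), toR2 (a, 0), toR2 (B, c)])
      (by intro i _; fin_cases i <;> simp <;> linarith)
      (by simp [Fin.sum_univ_three]; try ring)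
      (by intro i _; apply subset_convexHull; fin_cases i <;> simp)
    convert key using 1
    simp only [Fin.sum_univ_three, toR2]
    ext
    · simp [hl1, hl2]; field_simp; ring
    · simp [hl2]; field_simp

theorem interior_half (u v r : ℝ) (h : u ≠ 0 ∨ v ≠ 0) :
    interior {p : ℝ × ℝ | r ≤ u * p.1 + v * p.2} = {p | r < u * p.1 + v * p.2} := by
  let f : ℝ × ℝ →ₗ[ℝ] ℝ := u • LinearMap.fst ℝ ℝ ℝ + v • LinearMap.snd ℝ ℝ ℝ
  have hf : ∀ p, f p = u * p.1 + v * p.2 := fun p => by simp [f]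
  have hs : Function.Surjective f := by
    intro y
    rcases h with h | h
    · exact ⟨(y / u, 0), by rw [hf]; simp; field_simp⟩
    · exact ⟨(0, y / v), by rw [hf]; simp; field_simp⟩
  have ho : IsOpenMap f := f.isOpenMap_of_finiteDimensional hs
  have hcont : Continuous f := f.continuous_of_finiteDimensional
  have := ho.preimage_interior_eq_interior_preimage hcont (Set.Ici r)
  rw [interior_Ici] at this
  have e1 : {p : ℝ × ℝ | r ≤ u * p.1 + v * p.2} = f ⁻¹' Set.Ici r := by
    ext p; simp [hf]
  have e2 : {p : ℝ × ℝ | r < u * p.1 + v * p.2} = f ⁻¹' Set.Ioi r := by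
    ext p; simp [hf]
  rw [e1, e2, this]

theorem interior_triSet (a B c : ℝ) (hc : 0 < c) : interior (triSet a B c) =
    {p | 0 < p.2} ∩ ({p | 0 < c * p.1 - B * p.2} ∩ {p | -(c * a) < (B - a) * p.2 - c * p.1}) := by
  have h1 := interior_half 0 1 0 (Or.inr one_ne_zero)
  have h2 := interior_half c (-B) 0 (Or.inl hc.ne')
  have h3 := interior_half (-c) (B - a) (-(c * a)) (Or.inl (neg_ne_zero.2 hc.ne'))
  rw [triSet, interior_inter, interior_inter]
  congr 1
  · simpa using h1
  congr 1
  · simpa [sub_eq_add_neg] using h2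
  · have e : ∀ p : ℝ × ℝ, -c * p.1 + (B - a) * p.2 = (B - a) * p.2 - c * p.1 := fun p => by ring
    simpa only [e] using h3

theorem isClosed_triSet (a B c : ℝ) : IsClosed (triSet a B c) := by
  refine IsClosed.inter ?_ (IsClosed.inter ?_ ?_)
  · exact isClosed_le (by fun_prop) (by fun_prop)
  · exact isClosed_le (by fun_prop) (by fun_prop)
  · exact isClosed_le (by fun_prop) (by fun_prop)

theorem mem_tri_int (a B c : ℤ) (z : ℤ × ℤ) : toR2 z ∈ triSet a B c ↔
    0 ≤ z.2 ∧ B * z.2 ≤ c * z.1 ∧ c * z.1 ≤ c * a + (B - a) * z.2 := by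
  simp only [triSet, toR2, Set.mem_inter_iff, Set.mem_ofPred_eq]
  refine and_congr (by exact_mod_cast Iff.rfl) (and_congr ?_ ?_)
  · rw [sub_nonneg]; exact_mod_cast Iff.rfl
  · rw [← @Int.cast_le ℝ]; push_cast
    constructor <;> intro h <;> linarith

theorem mem_interior_int (a B c : ℤ) (hc : 0 < c) (z : ℤ × ℤ) :
    toR2 z ∈ interior (triSet a B c) ↔
    0 < z.2 ∧ B * z.2 < c * z.1 ∧ c * z.1 < c * a + (B - a) * z.2 := by
  rw [interior_triSet _ _ _ (by exact_mod_cast hc)]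
  simp only [toR2, Set.mem_inter_iff, Set.mem_ofPred_eq]
  refine and_congr (by exact_mod_cast Iff.rfl) (and_congr ?_ ?_)
  · rw [sub_pos]; exact_mod_cast Iff.rfl
  · rw [← @Int.cast_lt ℝ]; push_cast
    constructor <;> intro h <;> linarith

theorem bcount_tri (a B c : ℤ) (ha : 0 < a) (hc : 0 < c)
    (h1 : IsCoprime c B) (h2 : IsCoprime c (B - a)) :
    (bcount (triSet a B c) : ℤ) = a + 2 := by
  have hset : {z : ℤ × ℤ | toR2 z ∈ frontier (triSet a B c)} =
      ((insert (B, c) ((Finset.Icc 0 a).image fun x => ((x, 0) : ℤ × ℤ)) : Finset (ℤ × ℤ)) :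
        Set (ℤ × ℤ)) := by
    ext ⟨x, y⟩
    rw [Set.mem_ofPred_eq, (isClosed_triSet _ _ _).frontier_eq, Set.mem_sdiff, mem_tri_int,
      mem_interior_int _ _ _ hc]
    simp only [Finset.coe_insert, Finset.coe_image, Set.mem_insert_iff, Set.mem_image,
      Finset.coe_Icc, Set.mem_Icc, Prod.mk.injEq]
    constructor
    · rintro ⟨⟨p1, p2, p3⟩, hn⟩
      have hyc : y ≤ c := by nlinarith
      have hy : y = 0 ∨ y = c := by
        by_contra hcon
        push Not at hcon
        have nd : ¬ c ∣ y := by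
          intro hd
          exact hcon.2 (le_antisymm hyc (Int.le_of_dvd (by omega) hd))
        apply hn
        refine ⟨by omega, lt_of_le_of_ne p2 ?_, lt_of_le_of_ne p3 ?_⟩
        · intro h
          exact nd (h1.dvd_of_dvd_mul_left ⟨x, h⟩)
        · intro h
          exact nd (h2.dvd_of_dvd_mul_left ⟨x - a, by linarith⟩)
      rcases hy with rfl | rfl
      · right
        refine ⟨x, ⟨?_, ?_⟩, rfl, rfl⟩ <;> nlinarith
      · left
        refine ⟨?_, rfl⟩
        apply le_antisymm <;> nlinarith
    · rintro (⟨rfl, rfl⟩ | ⟨x', ⟨q1, q2⟩, rfl, rfl⟩)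
      · refine ⟨⟨hc.le, by nlinarith, by nlinarith⟩, ?_⟩
        rintro ⟨-, r, -⟩
        nlinarith
      · refine ⟨⟨le_rfl, by nlinarith, by nlinarith⟩, ?_⟩
        rintro ⟨r, -, -⟩
        exact lt_irrefl _ r
  rw [bcount, hset, Set.ncard_coe_finset, Finset.card_insert_of_notMem,
    Finset.card_image_of_injective]
  · simp; omega
  · intro x y h; simpa using h
  · simp; intro _ _ h; omega

theorem floor_pair (B c y : ℤ) (hc : 0 < c) (h1 : IsCoprime c B) (hy : 0 < y) (hyc : y < c) :
    B * y / c + B * (c - y) / c = B - 1 := by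
  have nd : ¬ c ∣ B * y := by
    intro h
    have := Int.le_of_dvd hy (h1.dvd_of_dvd_mul_left h)
    omega
  have e := Int.mul_ediv_add_emod (B * y) c
  have r0 := Int.emod_nonneg (B * y) hc.ne'
  have r1 := Int.emod_lt_of_pos (B * y) hc
  have r2 : B * y % c ≠ 0 := fun h => nd (Int.dvd_of_emod_eq_zero h)
  have : B * (c - y) / c = B - 1 - B * y / c := by
    rw [Int.ediv_eq_iff_of_pos hc]
    have : 0 < B * y % c := by omega
    constructor <;> nlinarith
  omega

theorem icount_tri (a B c : ℤ) (ha : 0 < a) (hc : 0 < c)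
    (h1 : IsCoprime c B) (h2 : IsCoprime c (B - a)) :
    2 * (icount (triSet a B c) : ℤ) = (c - 1) * a := by
  let F : Finset (Σ _ : ℤ, ℤ) := (Finset.Ioo 0 c).sigma
    (fun y => Finset.Ioc (B * y / c) (a + (B - a) * y / c))
  have hset : {z : ℤ × ℤ | toR2 z ∈ interior (triSet a B c)} =
      ((F.image fun s => ((s.2, s.1) : ℤ × ℤ) : Finset (ℤ × ℤ)) : Set (ℤ × ℤ)) := by
    ext ⟨x, y⟩
    rw [Set.mem_ofPred_eq, mem_interior_int _ _ _ hc]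
    simp only [Finset.coe_image, Set.mem_image, Finset.mem_coe, F, Finset.mem_sigma,
      Finset.mem_Ioo, Finset.mem_Ioc, Prod.mk.injEq]
    have k1 : B * y / c < x ↔ B * y < c * x := by
      rw [Int.ediv_lt_iff_lt_mul hc, mul_comm x c]
    have k2 : x ≤ a + (B - a) * y / c ↔ c * x ≤ c * a + (B - a) * y := by
      rw [← sub_le_iff_le_add', Int.le_ediv_iff_mul_le hc]
      constructor <;> intro h <;> linarith
    constructor
    · rintro ⟨p1, p2, p3⟩
      refine ⟨⟨y, x⟩, ⟨⟨p1, by nlinarith⟩, k1.2 p2, k2.2 p3.le⟩, rfl, rfl⟩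
    · rintro ⟨⟨y', x'⟩, ⟨⟨q1, q2⟩, q3, q4⟩, rfl, rfl⟩
      refine ⟨q1, k1.1 q3, lt_of_le_of_ne (k2.1 q4) ?_⟩
      intro h
      have := Int.le_of_dvd q1 (h2.dvd_of_dvd_mul_left ⟨x' - a, by linarith⟩)
      exact absurd q2 (not_lt.2 this)
  have hcard : (icount (triSet a B c) : ℤ) =
      ∑ y ∈ Finset.Ioo 0 c, (a + (B - a) * y / c - B * y / c) := by
    rw [icount, hset, Set.ncard_coe_finset, Finset.card_image_of_injective, Finset.card_sigma]
    · push_cast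
      apply Finset.sum_congr rfl
      intro y hy
      rw [Finset.mem_Ioo] at hy
      rw [Int.card_Ioc, Int.toNat_of_nonneg]
      rw [sub_nonneg, add_comm, ← Int.add_mul_ediv_right _ _ hc.ne']
      apply Int.ediv_le_ediv hc
      nlinarith
    · rintro ⟨x, y⟩ ⟨x', y'⟩ h
      simp only [Prod.mk.injEq] at h
      rw [h.1, h.2]
  have hrefl : ∑ y ∈ Finset.Ioo 0 c, (a + (B - a) * y / c - B * y / c) =
      ∑ y ∈ Finset.Ioo 0 c, (a + (B - a) * (c - y) / c - B * (c - y) / c) := by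
    apply Finset.sum_nbij' (fun y => c - y) (fun y => c - y)
    · intro y hy; simp only [Finset.mem_Ioo] at *; omega
    · intro y hy; simp only [Finset.mem_Ioo] at *; omega
    · intro y _; ring
    · intro y _; ring
    · intro y _; simp
  rw [two_mul]
  nth_rewrite 2 [hcard]
  rw [hcard, hrefl, ← hrefl]
  nth_rewrite 2 [hrefl]
  rw [← Finset.sum_add_distrib]
  have : ∀ y ∈ Finset.Ioo 0 c, (a + (B - a) * y / c - B * y / c) +
      (a + (B - a) * (c - y) / c - B * (c - y) / c) = a := by
    intro y hy
    rw [Finset.mem_Ioo] at hy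
    have e1 := floor_pair B c y hc h1 hy.1 hy.2
    have e2 := floor_pair (B - a) c y hc h2 hy.1 hy.2
    linarith
  rw [Finset.sum_congr rfl this]
  simp only [Finset.sum_const, Int.card_Ioo, nsmul_eq_mul]
  rw [Int.toNat_of_nonneg (by omega)]
  ring

theorem exists_B (a c : ℤ) (hc : 0 < c) (ha : 0 < a) (hpar : 2 ∣ c → 2 ∣ a) :
    ∃ B : ℤ, 0 ≤ B ∧ Int.gcd B c = 1 ∧ Int.gcd (B - a) c = 1 := by
  let S : Finset ℕ := c.natAbs.primeFactors.filter fun p => ¬ (p : ℤ) ∣ a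
  let m : ℕ := ∏ p ∈ S, p
  have hm : ∀ p : ℕ, p.Prime → (p : ℤ) ∣ c → ((p : ℤ) ∣ (m : ℤ) ↔ ¬ (p : ℤ) ∣ a) := by
    intro p hp hpc
    constructor
    · intro h
      have h' : p ∣ ∏ q ∈ S, q := by exact_mod_cast h
      obtain ⟨q, hq, hpq⟩ := (hp.prime.dvd_finsetProd_iff _).1 h'
      have hq' := Finset.mem_filter.1 hq
      have := (Nat.prime_dvd_prime_iff_eq hp (Nat.prime_of_mem_primeFactors hq'.1)).1 hpq
      rw [this]; exact hq'.2
    · intro h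
      have : p ∣ ∏ q ∈ S, q := Finset.dvd_prod_of_mem (fun q => q) (by
        simp only [S, Finset.mem_filter, Nat.mem_primeFactors]
        exact ⟨⟨hp, Int.natCast_dvd.1 hpc, by omega⟩, h⟩)
      exact_mod_cast this
  have red : ∀ X : ℤ, (∀ p : ℕ, p.Prime → (p : ℤ) ∣ c → ¬ (p : ℤ) ∣ X) → Int.gcd X c = 1 := by
    intro X h
    by_contra hne
    obtain ⟨p, hp, hd⟩ := Nat.exists_prime_and_dvd hne
    have hd' : (p : ℤ) ∣ (Int.gcd X c : ℤ) := by exact_mod_cast hd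
    exact h p hp (hd'.trans (Int.gcd_dvd_right ..)) (hd'.trans (Int.gcd_dvd_left ..))
  refine ⟨a * (c - 1) + m, ?_, red _ ?_, red _ ?_⟩
  · have : 0 ≤ a * (c - 1) := mul_nonneg ha.le (by omega)
    positivity
  · intro p hp hpc hd
    by_cases hpa : (p : ℤ) ∣ a
    · have : (p : ℤ) ∣ m := (Int.dvd_add_right (hpa.mul_right _)).1 hd
      exact (hm p hp hpc).1 this hpa
    · have h3 := (Int.dvd_add_left ((hm p hp hpc).2 hpa)).1 hd
      apply hpa
      have : a = a * c - a * (c - 1) := by ring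
      rw [this]
      exact dvd_sub (hpc.mul_left _) h3
  · intro p hp hpc hd
    by_cases hpa : (p : ℤ) ∣ a
    · have h4 : (p : ℤ) ∣ m := by
        have : (m : ℤ) = (a * (c - 1) + m - a) - a * (c - 1 - 1) := by ring
        rw [this]
        exact dvd_sub hd (hpa.mul_right _)
      exact (hm p hp hpc).1 h4 hpa
    · have h3 : (p : ℤ) ∣ 2 * a := by
        have : 2 * a = a * c + m - (a * (c - 1) + m - a) := by ring
        rw [this]
        exact dvd_sub (dvd_add (hpc.mul_left _) ((hm p hp hpc).2 hpa)) hd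
      rcases (Nat.prime_iff_prime_int.1 hp).dvd_or_dvd h3 with h | h
      · have h5 : p ∣ 2 := by exact_mod_cast h
        have h6 := (Nat.prime_dvd_prime_iff_eq hp Nat.prime_two).1 h5
        subst h6
        exact hpa (hpar hpc)
      · exact hpa h

theorem isLatticeTriangle_tri (a B c : ℤ) (ha : 0 < a) (hc : 0 < c) :
    IsLatticeTriangle (convexHull ℝ {toR2 (0, 0), toR2 (a, 0), toR2 (B, c)}) := by
  refine ⟨(0, 0), (a, 0), (B, c), ?_, rfl⟩
  have ha' : (a : ℝ) ≠ 0 := by exact_mod_cast ha.ne'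
  have hc' : (c : ℝ) ≠ 0 := by exact_mod_cast hc.ne'
  rw [affineIndependent_iff_of_fintype]
  intro w hw hs
  rw [Finset.weightedVSub_eq_linear_combination _ hw] at hs
  rw [Fin.sum_univ_three] at hw
  rw [Fin.sum_univ_three, Prod.ext_iff] at hs
  simp [toR2] at hs
  obtain ⟨e1, e2⟩ := hs
  have w2 : w 2 = 0 := e2.resolve_right hc.ne'
  have w1 : w 1 = 0 := by
    rw [w2] at e1
    simp at e1
    exact e1.resolve_right ha.ne'
  have w0 : w 0 = 0 := by rw [w1, w2] at hw; linarith
  intro i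
  fin_cases i <;> assumption

/-- Every integer pair `(b, i)` on the lower facet of the closure of the cone `σ_c°`
(i.e. `i = ((c−1)/2)·b − (c−1)` with `b ≥ 2c²+2c+2`) is realized by a lattice triangle;
one can take the triangle with vertices `(0,0)`, `((2i+b−2)/c, 0)`, `(B, c)` for any
integer `B ≥ 0` with `gcd(B, c) = gcd(B − (2i+b−2)/c, c) = 1`. -/
theorem lower_facet_realized (c : ℤ) (hc : 1 ≤ c) (b i : ℤ)
    (hlow : (i : ℝ) = ((c : ℝ) - 1) / 2 * (b : ℝ) - ((c : ℝ) - 1))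
    (hb : 2 * c ^ 2 + 2 * c + 2 ≤ b) :
    (∃ T : Set (ℝ × ℝ), IsLatticeTriangle T ∧ (bcount T : ℤ) = b ∧ (icount T : ℤ) = i) ∧
    ∀ B : ℤ, 0 ≤ B → Int.gcd B c = 1 → Int.gcd (B - (2 * i + b - 2) / c) c = 1 →
      IsLatticeTriangle
          (convexHull ℝ {toR2 (0, 0), toR2 ((2 * i + b - 2) / c, 0), toR2 (B, c)}) ∧
        (bcount (convexHull ℝ {toR2 (0, 0), toR2 ((2 * i + b - 2) / c, 0), toR2 (B, c)}) : ℤ)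
          = b ∧
        (icount (convexHull ℝ {toR2 (0, 0), toR2 ((2 * i + b - 2) / c, 0), toR2 (B, c)}) : ℤ)
          = i := by
  have hc0 : 0 < c := by omega
  have h2i : 2 * i = (c - 1) * (b - 2) := by
    have : (2 * i : ℝ) = (c - 1) * (b - 2) := by rw [hlow]; ring
    exact_mod_cast this
  have hdiv : (2 * i + b - 2) / c = b - 2 := by
    have : 2 * i + b - 2 = c * (b - 2) := by rw [h2i]; ring
    rw [this, Int.mul_ediv_cancel_left _ hc0.ne']
  rw [hdiv]
  have ha : 0 < b - 2 := by nlinarith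
  have main : ∀ B : ℤ, 0 ≤ B → Int.gcd B c = 1 → Int.gcd (B - (b - 2)) c = 1 →
      IsLatticeTriangle
          (convexHull ℝ {toR2 (0, 0), toR2 (b - 2, 0), toR2 (B, c)}) ∧
        (bcount (convexHull ℝ {toR2 (0, 0), toR2 (b - 2, 0), toR2 (B, c)}) : ℤ)
          = b ∧
        (icount (convexHull ℝ {toR2 (0, 0), toR2 (b - 2, 0), toR2 (B, c)}) : ℤ)
          = i := by
    intro B _ g1 g2
    have k1 := (Int.isCoprime_iff_gcd_eq_one.2 g1).symm
    have k2 := (Int.isCoprime_iff_gcd_eq_one.2 g2).symm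
    refine ⟨isLatticeTriangle_tri _ _ _ ha hc0, ?_, ?_⟩
    · rw [hull_eq_triSet _ _ _ ha hc0, bcount_tri _ _ _ ha hc0 k1 k2]; ring
    · rw [hull_eq_triSet _ _ _ ha hc0]
      have := icount_tri _ _ _ ha hc0 k1 k2
      omega
  refine ⟨?_, main⟩
  obtain ⟨B, hB, g1, g2⟩ := exists_B (b - 2) c hc0 ha (by
    rintro ⟨k, hk⟩
    refine ⟨k * (b - 2) - i, ?_⟩
    rw [hk] at h2i
    linarith)
  exact ⟨_, main B hB g1 g2⟩
end

section
/- Every lattice triangle T satisfies a(T) ≥ w(T)²/4, where w(T) denotes the lattice width of T. Equivalently, for every lattice triangle T of area a there exists a nonzero linear functional u : ℤ² → ℤ such that (max_{x ∈ T} u(x) − min_{x ∈ T} u(x))² ≤ 4a. -/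
open MeasureTheory

/-- Hermite reduction for positive definite integral binary quadratic forms. -/
lemma hermite_form (n : ℕ) : ∀ A B C : ℤ, 0 < A → A ≤ n → 0 < 4 * A * C - B ^ 2 →
    ∃ x y : ℤ, (x ≠ 0 ∨ y ≠ 0) ∧ 0 ≤ A * x ^ 2 + B * x * y + C * y ^ 2 ∧
      3 * (A * x ^ 2 + B * x * y + C * y ^ 2) ^ 2 ≤ 4 * A * C - B ^ 2 := by
  induction n with
  | zero => intro A B C h1 h2; push_cast at h2; omega
  | succ n ih =>
    intro A B C hA hn hD
    obtain ⟨k, hk1, hk2⟩ : ∃ k : ℤ, -A ≤ B + 2 * k * A ∧ B + 2 * k * A ≤ A := by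
      refine ⟨-((B + A) / (2 * A)), ?_, ?_⟩
      · have := Int.ediv_mul_le (B + A) (show 2 * A ≠ 0 by omega)
        nlinarith
      · have := Int.lt_ediv_add_one_mul_self (B + A) (show 0 < 2 * A by omega)
        nlinarith
    obtain ⟨B', hB'⟩ : ∃ B', B' = B + 2 * k * A := ⟨_, rfl⟩
    obtain ⟨C', hC'⟩ : ∃ C', C' = A * k ^ 2 + B * k + C := ⟨_, rfl⟩
    rw [← hB'] at hk1 hk2
    have hdisc : 4 * A * C - B ^ 2 = 4 * A * C' - B' ^ 2 := by subst hB' hC'; ring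
    have hC0 : 0 < C' := by
      rw [hdisc] at hD
      by_contra h
      have : A * C' ≤ 0 := mul_nonpos_of_nonneg_of_nonpos hA.le (not_lt.mp h)
      nlinarith [sq_nonneg B']
    by_cases hlt : C' < A
    · obtain ⟨x, y, hne, h0, h⟩ := ih C' B' A hC0 (by push_cast at hn; omega)
        (by rw [hdisc] at hD; linarith)
      have e : A * (y + k * x) ^ 2 + B * (y + k * x) * x + C * x ^ 2
          = C' * x ^ 2 + B' * x * y + A * y ^ 2 := by subst hB' hC'; ring
      refine ⟨y + k * x, x, ?_, ?_, ?_⟩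
      · by_cases hx : x = 0
        · left; subst hx; simpa using hne
        · right; exact hx
      · rw [e]; exact h0
      · rw [e, hdisc]; linarith
    · refine ⟨1, 0, Or.inl one_ne_zero, by nlinarith, ?_⟩
      rw [hdisc]
      nlinarith [mul_nonneg (show 0 ≤ A - B' by omega) (show 0 ≤ A + B' by omega),
        mul_nonneg hA.le (show 0 ≤ C' - A by omega)]

lemma exists_short (p1 p2 q1 q2 : ℤ) : ∃ x y : ℤ, (x ≠ 0 ∨ y ≠ 0) ∧
    (x * p1 + y * p2) ^ 2 ≤ 2 * |p1 * q2 - p2 * q1| ∧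
    (x * q1 + y * q2) ^ 2 ≤ 2 * |p1 * q2 - p2 * q1| ∧
    ((x * p1 + y * p2) - (x * q1 + y * q2)) ^ 2 ≤ 2 * |p1 * q2 - p2 * q1| := by
  by_cases hD : p1 * q2 - p2 * q1 = 0
  · rw [hD]
    by_cases hp : p1 = 0 ∧ p2 = 0
    · by_cases hq : q1 = 0 ∧ q2 = 0
      · exact ⟨1, 0, Or.inl one_ne_zero, by simp [hp, hq]⟩
      · have e : -q2 * q1 + q1 * q2 = 0 := by ring
        refine ⟨-q2, q1, by omega, ?_⟩
        rw [e]; simp [hp]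
    · have e : -p2 * p1 + p1 * p2 = 0 := by ring
      have e' : -p2 * q1 + p1 * q2 = 0 := by linarith
      refine ⟨-p2, p1, by omega, ?_⟩
      rw [e, e']; simp
  · have hA : 0 < p1 ^ 2 - p1 * q1 + q1 ^ 2 := by
      have : p1 ≠ 0 ∨ q1 ≠ 0 := by
        by_contra h
        push Not at h
        apply hD; simp [h]
      rcases this with h | h
      · have := sq_pos_of_ne_zero h
        nlinarith [sq_nonneg (p1 - 2 * q1)]
      · have := sq_pos_of_ne_zero h
        nlinarith [sq_nonneg (q1 - 2 * p1)]
    have hD2 := sq_pos_of_ne_zero hD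
    have hdisc : 4 * (p1 ^ 2 - p1 * q1 + q1 ^ 2) * (p2 ^ 2 - p2 * q2 + q2 ^ 2)
        - (2 * p1 * p2 - p1 * q2 - p2 * q1 + 2 * q1 * q2) ^ 2
        = 3 * (p1 * q2 - p2 * q1) ^ 2 := by ring
    obtain ⟨x, y, hne, h0, h⟩ := hermite_form (p1 ^ 2 - p1 * q1 + q1 ^ 2).toNat _
      (2 * p1 * p2 - p1 * q2 - p2 * q1 + 2 * q1 * q2) (p2 ^ 2 - p2 * q2 + q2 ^ 2) hA
      (Int.self_le_toNat _) (by rw [hdisc]; linarith)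
    rw [hdisc] at h
    have e : (p1 ^ 2 - p1 * q1 + q1 ^ 2) * x ^ 2 +
        (2 * p1 * p2 - p1 * q2 - p2 * q1 + 2 * q1 * q2) * x * y +
        (p2 ^ 2 - p2 * q2 + q2 ^ 2) * y ^ 2 = (x * p1 + y * p2) ^ 2
        - (x * p1 + y * p2) * (x * q1 + y * q2) + (x * q1 + y * q2) ^ 2 := by ring
    rw [e] at h h0
    refine ⟨x, y, hne, ?_⟩
    generalize x * p1 + y * p2 = s at *
    generalize x * q1 + y * q2 = t at *
    have hle := sq_le_sq.1 (le_of_mul_le_mul_left h (by norm_num))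
    rw [abs_of_nonneg h0] at hle
    refine ⟨?_, ?_, ?_⟩
    · nlinarith [sq_nonneg (s - 2 * t)]
    · nlinarith [sq_nonneg (t - 2 * s)]
    · nlinarith [sq_nonneg (s + t)]

/-- The standard triangle. -/
def stdTri : Set (ℝ × ℝ) := {x | 0 ≤ x.1 ∧ 0 ≤ x.2 ∧ x.1 + x.2 ≤ 1}

lemma volume_stdTri : ENNReal.ofReal (1 / 2) ≤ volume stdTri := by
  have h := volume_regionBetween_eq_integral (μ := (volume : Measure ℝ))
    (f := fun _ => (0 : ℝ)) (g := fun x => 1 - x) (s := Set.Ioc 0 1)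
    (by apply Continuous.integrableOn_Ioc; fun_prop)
    (by apply Continuous.integrableOn_Ioc; fun_prop)
    measurableSet_Ioc (by intro x hx; simpa using hx.2)
  have e : ∫ y in Set.Ioc (0 : ℝ) 1, ((fun x : ℝ => 1 - x) - (fun _ => (0 : ℝ)) : ℝ → ℝ) y = 1 / 2 := by
    rw [← intervalIntegral.integral_of_le zero_le_one]
    simp only [Pi.sub_apply, sub_zero]
    rw [intervalIntegral.integral_sub (by simp) (by simp)]
    simp; norm_num
  rw [e] at h
  rw [← h]
  apply measure_mono
  rintro ⟨a, b⟩ ⟨h1, h2⟩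
  simp only [Set.mem_Ioc, Set.mem_Ioo] at h1 h2
  refine ⟨h1.1.le, h2.1.le, ?_⟩
  simp only
  linarith

lemma area_tri (v0 v1 v2 : ℝ × ℝ) :
    |(v1.1 - v0.1) * (v2.2 - v0.2) - (v1.2 - v0.2) * (v2.1 - v0.1)| / 2 ≤
      area (convexHull ℝ {v0, v1, v2}) := by
  set M : Matrix (Fin 2) (Fin 2) ℝ := !![v1.1 - v0.1, v2.1 - v0.1; v1.2 - v0.2, v2.2 - v0.2]
    with hM
  set L := Matrix.toLin (Module.Basis.finTwoProd ℝ) (Module.Basis.finTwoProd ℝ) M with hL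
  have hdet : LinearMap.det L
      = (v1.1 - v0.1) * (v2.2 - v0.2) - (v1.2 - v0.2) * (v2.1 - v0.1) := by
    rw [hL, LinearMap.det_toLin, hM, Matrix.det_fin_two_of]; ring
  have hv := Measure.addHaar_image_linearMap (volume : Measure (ℝ × ℝ)) L stdTri
  have hsub : (fun x => v0 + x) '' (L '' stdTri) ⊆ convexHull ℝ {v0, v1, v2} := by
    rintro _ ⟨_, ⟨⟨a, b⟩, ⟨ha, hb, hab⟩, rfl⟩, rfl⟩
    simp only at ha hb hab
    have hc := convex_convexHull ℝ ({v0, v1, v2} : Set (ℝ × ℝ))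
    have h0 : v0 ∈ convexHull ℝ ({v0, v1, v2} : Set (ℝ × ℝ)) := subset_convexHull _ _ (by simp)
    have h1 : v1 ∈ convexHull ℝ ({v0, v1, v2} : Set (ℝ × ℝ)) := subset_convexHull _ _ (by simp)
    have h2 : v2 ∈ convexHull ℝ ({v0, v1, v2} : Set (ℝ × ℝ)) := subset_convexHull _ _ (by simp)
    have := hc.sum_mem (t := Finset.univ) (w := ![1 - a - b, a, b]) (z := ![v0, v1, v2])
      (by intro i _; fin_cases i <;> simp <;> linarith) (by simp [Fin.sum_univ_three]; ring)
      (by intro i _; fin_cases i <;> simpa)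
    convert this using 1
    simp only [hL, hM, Matrix.toLin_finTwoProd_apply, Fin.sum_univ_three]
    ext <;> simp <;> ring
  have hfin : volume (convexHull ℝ ({v0, v1, v2} : Set (ℝ × ℝ))) ≠ ⊤ :=
    (Set.Finite.isCompact_convexHull ℝ (Set.toFinite _)).measure_lt_top.ne
  have hle := measure_mono (μ := volume) hsub
  rw [Set.image_add_left, measure_preimage_add, hv, hdet] at hle
  have h2 := (mul_le_mul_right volume_stdTri _).trans hle
  rw [← ENNReal.ofReal_mul (abs_nonneg _)] at h2
  have := (ENNReal.ofReal_le_iff_le_toReal hfin).1 h2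
  unfold area
  linarith

/-- Every lattice triangle `T` satisfies `a(T) ≥ w(T)²/4`: there is a nonzero integer
linear functional `u` whose width `max_{x ∈ T} u(x) − min_{x ∈ T} u(x)` on `T` satisfies
`(max u − min u)² ≤ 4·a(T)`. -/
theorem area_ge_width_sq_div_four (T : Set (ℝ × ℝ)) (hT : IsLatticeTriangle T) :
    ∃ u : ℤ × ℤ, u ≠ 0 ∧
      (sSup ((fun x : ℝ × ℝ => (u.1 : ℝ) * x.1 + (u.2 : ℝ) * x.2) '' T) -
        sInf ((fun x : ℝ × ℝ => (u.1 : ℝ) * x.1 + (u.2 : ℝ) * x.2) '' T)) ^ 2 ≤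
      4 * area T := by
  obtain ⟨v0, v1, v2, -, rfl⟩ := hT
  obtain ⟨x, y, hne, h1, h2, h3⟩ :=
    exists_short (v1.1 - v0.1) (v1.2 - v0.2) (v2.1 - v0.1) (v2.2 - v0.2)
  have harea := area_tri (toR2 v0) (toR2 v1) (toR2 v2)
  refine ⟨(x, y), ?_, ?_⟩
  · intro h
    simp only [Prod.mk_eq_zero] at h
    omega
  have h1' := (Int.cast_le (R := ℝ)).2 h1
  have h2' := (Int.cast_le (R := ℝ)).2 h2
  have h3' := (Int.cast_le (R := ℝ)).2 h3
  push_cast at h1' h2' h3'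
  simp only [toR2] at harea
  change _ ≤ area (convexHull ℝ {toR2 v0, toR2 v1, toR2 v2}) at harea
  set T := convexHull ℝ {toR2 v0, toR2 v1, toR2 v2} with hTdef
  set f : ℝ × ℝ → ℝ := fun z => ((x, y).1 : ℝ) * z.1 + ((x, y).2 : ℝ) * z.2 with hf
  have hlin : IsLinearMap ℝ f := by
    constructor
    · intro a b; simp [hf]; ring
    · intro c a; simp [hf]; ring
  obtain ⟨M, hM, hM0, hM1, hM2⟩ : ∃ M, (M = f (toR2 v0) ∨ M = f (toR2 v1) ∨ M = f (toR2 v2)) ∧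
      f (toR2 v0) ≤ M ∧ f (toR2 v1) ≤ M ∧ f (toR2 v2) ≤ M := by
    refine ⟨max (f (toR2 v0)) (max (f (toR2 v1)) (f (toR2 v2))), ?_, by simp, by simp, by simp⟩
    grind
  obtain ⟨m, hm, hm0, hm1, hm2⟩ : ∃ m, (m = f (toR2 v0) ∨ m = f (toR2 v1) ∨ m = f (toR2 v2)) ∧
      m ≤ f (toR2 v0) ∧ m ≤ f (toR2 v1) ∧ m ≤ f (toR2 v2) := by
    refine ⟨min (f (toR2 v0)) (min (f (toR2 v1)) (f (toR2 v2))), ?_, by simp, by simp, by simp⟩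
    grind
  have hTM : T ⊆ {z | f z ≤ M} := by
    apply convexHull_min _ (convex_halfSpace_le hlin M)
    rintro z (rfl | rfl | rfl) <;> assumption
  have hTm : T ⊆ {z | m ≤ f z} := by
    apply convexHull_min _ (convex_halfSpace_ge hlin m)
    rintro z (rfl | rfl | rfl) <;> assumption
  have hne' : (f '' T).Nonempty :=
    ⟨_, Set.mem_image_of_mem f (subset_convexHull ℝ _ (Set.mem_insert _ _))⟩
  have hub : ∀ b ∈ f '' T, b ≤ M := by rintro _ ⟨z, hz, rfl⟩; exact hTM hz
  have hlb : ∀ b ∈ f '' T, m ≤ b := by rintro _ ⟨z, hz, rfl⟩; exact hTm hz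
  have hS : sSup (f '' T) ≤ M := csSup_le hne' hub
  have hI : m ≤ sInf (f '' T) := le_csInf hne' hlb
  have hIS : sInf (f '' T) ≤ sSup (f '' T) := by
    obtain ⟨b, hb⟩ := hne'
    exact (csInf_le ⟨m, hlb⟩ hb).trans (le_csSup ⟨M, hub⟩ hb)
  have hsq : (sSup (f '' T) - sInf (f '' T)) ^ 2 ≤ (M - m) ^ 2 :=
    pow_le_pow_left₀ (by linarith) (by linarith) 2
  refine hsq.trans ?_
  have hA0 : 0 ≤ area T := ENNReal.toReal_nonneg
  have e1 : (f (toR2 v1) - f (toR2 v0)) ^ 2 ≤ 4 * area T := by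
    simp only [hf, toR2]; linarith
  have e2 : (f (toR2 v2) - f (toR2 v0)) ^ 2 ≤ 4 * area T := by
    simp only [hf, toR2]; linarith
  have e3 : (f (toR2 v1) - f (toR2 v2)) ^ 2 ≤ 4 * area T := by
    simp only [hf, toR2]; linarith
  rcases hM with rfl | rfl | rfl <;> rcases hm with rfl | rfl | rfl <;>
    first
    | exact e1
    | exact e2
    | exact e3
    | (rw [sub_self]; linarith)
    | (rw [sub_sq_comm]; first | exact e1 | exact e2 | exact e3)
end
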